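/- Let (X,T) be a topological dynamical system and 𝒰 a finite partition of X into closed-open sets. Let s ≥ 0 and N ∈ ℕ. If Z ⊆ X is analytic, then M^s_N(𝒰, Z) = sup { M^s_N(𝒰, K) : K ⊆ Z, K compact }. -/

import Mathlib

/-!
`M^s_N(𝒰, ·)` is a Choquet capacity, and analytic sets are capacitable.

Continuity from below rests on the disjointness of the elements of `𝒰`: if `X(u)` and `X(v)` meet,
then one of the strings `u`, `v` is a prefix of the other. Consequently, if two families `A`, `B`
both cover `Z`, then `Z` is also covered by the family obtained from `A` and `B` (counting strings
of `A ∩ B` twice) by removing the prefix-minimal strings of `A ∪ B` once. This strong subadditivity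
bounds the weight of the minimal strings of `Λ 0 ∪ ⋯ ∪ Λ n`, for nearly optimal covers `Λ n` of an
increasing sequence `Z n`, by the value at `Z n` plus a small error. In the limit, the minimal
strings of `⋃ n, Λ n` form a cover of `⋃ n, Z n` of weight at most `sup M^s_N(𝒰, Z n)` plus a small
error.

Capacitability: writing an analytic set as `f(ℕ^ℕ)`, one bounds the coordinates of `ℕ^ℕ` one after
the other by some `b k`, keeping the capacity of the image above a given level `a` below that of the
whole set. The image under `f` of the compact box `{x | x ≤ b}` still has capacity at least `a`,
because every neighborhood of the box contains, for some `k`, all points that satisfy the first `k`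
bounds.
-/

open Filter Set MeasureTheory Topology
open scoped ENNReal NNReal

section CoverMeasure

variable {X : Type*} [MetricSpace X]

/-- For a string `u = U₁…U_n` of elements of a cover, the set
`X(u) = U₁ ∩ T⁻¹U₂ ∩ ⋯ ∩ T^{-(n-1)}U_n`. -/
def stringSet (T : X → X) : List (Set X) → Set X
  | [] => Set.univ
  | U :: l => U ∩ T ⁻¹' stringSet T l

/-- `M^s_N(𝒰, Z) = inf_Λ Σ_{u ∈ Λ} e^{-s·m(u)}`, the infimum being over all families
`Λ` of strings of elements of `𝒰`, each of length `m(u) ≥ N`, such that the sets `X(u)`,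
`u ∈ Λ`, cover `Z`. -/
noncomputable def coverM (T : X → X) (U : Finset (Set X)) (s : ℝ) (N : ℕ) (Z : Set X) :
    ℝ≥0∞ :=
  ⨅ (Λ : Set (List (Set X)))
    (_ : ∀ u ∈ Λ, (∀ V ∈ u, V ∈ U) ∧ N ≤ u.length)
    (_ : Z ⊆ ⋃ u ∈ Λ, stringSet T u),
    ∑' u : Λ, ENNReal.ofReal (Real.exp (-s * (u : List (Set X)).length))

end CoverMeasure

section Capacity

variable {X α : Type*} [TopologicalSpace X] [CompleteLinearOrder α]

/-- A Choquet capacity on the topological space `X` (relative to its compact sets), with values in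
a complete linear order: a monotone set function, continuous from below along increasing sequences,
whose value at a compact set is approximated from above by its values at open neighborhoods. -/
structure IsChoquetCapacity (c : Set X → α) : Prop where
  mono : Monotone c
  iUnion_le_iSup : ∀ ⦃Z : ℕ → Set X⦄, Monotone Z → c (⋃ n, Z n) ≤ ⨆ n, c (Z n)
  exists_isOpen_lt : ∀ ⦃K : Set X⦄, IsCompact K → ∀ ⦃a : α⦄, c K < a →
    ∃ O, IsOpen O ∧ K ⊆ O ∧ c O < a

lemma exists_forall_lt_le_subset_of_Iic_subset {b : ℕ → ℕ} {O : Set (ℕ → ℕ)} (hO : IsOpen O)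
    (hb : Iic b ⊆ O) : ∃ k, {x : ℕ → ℕ | ∀ i < k, x i ≤ b i} ⊆ O := by
  let := PiNat.metricSpaceNatNat
  have hcompact : IsCompact (Iic b) := Icc_bot (a := b) ▸ isCompact_Icc
  obtain ⟨δ, hδ, hδO⟩ := hcompact.exists_thickening_subset_open hO hb
  obtain ⟨k, hk⟩ := exists_pow_lt_of_lt_one hδ one_half_lt_one
  refine ⟨k, fun x hx ↦ hδO (Metric.mem_thickening_iff.2 ⟨x ⊓ b, mem_Iic.2 inf_le_right, ?_⟩)⟩
  have hcyl : x ∈ PiNat.cylinder (x ⊓ b) k := fun i hi ↦ (min_eq_left (hx i hi)).symm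
  exact (PiNat.mem_cylinder_iff_dist_le.1 hcyl).trans_lt hk

namespace IsChoquetCapacity

variable {c : Set X → α} {a : α}

lemma exists_lt_image_inter_le (hc : IsChoquetCapacity c) (f : (ℕ → ℕ) → X) {S : Set (ℕ → ℕ)}
    (k : ℕ) (ha : a < c (f '' S)) : ∃ m, a < c (f '' (S ∩ {x | x k ≤ m})) := by
  have hS : f '' S = ⋃ m, f '' (S ∩ {x | x k ≤ m}) := by
    rw [← image_iUnion, ← inter_iUnion,
      iUnion_eq_univ_iff.2 fun x ↦ ⟨x k, le_refl (x k)⟩, inter_univ]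
  have hmono : Monotone fun m ↦ f '' (S ∩ {x | x k ≤ m}) := fun _ _ hm ↦
    image_mono (inter_subset_inter_right S fun _ hx ↦ le_trans hx hm)
  rw [hS] at ha
  exact lt_iSup_iff.1 (ha.trans_le (hc.iUnion_le_iSup hmono))

lemma exists_forall_lt_image_box (hc : IsChoquetCapacity c) {f : (ℕ → ℕ) → X}
    (ha : a < c (range f)) :
    ∃ b : ℕ → ℕ, ∀ k, a < c (f '' {x | ∀ i < k, x i ≤ b i}) := by
  choose! g hg using fun S k ↦ hc.exists_lt_image_inter_le (a := a) f (S := S) k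
  let S : ℕ → Set (ℕ → ℕ) := Nat.rec univ fun k S ↦ S ∩ {x | x k ≤ g S k}
  have hSlt (k : ℕ) : a < c (f '' S k) := by
    induction k with
    | zero => rwa [← image_univ] at ha
    | succ k ih => exact hg (S k) k ih
  have hSbox (k : ℕ) : ∀ x ∈ S k, ∀ i < k, x i ≤ g (S i) i := by
    induction k with
    | zero => exact fun _ _ _ hi ↦ absurd hi (Nat.not_lt_zero _)
    | succ k ih => exact fun x hx ↦ Nat.forall_lt_succ_right.2 ⟨ih x hx.1, hx.2⟩
  exact ⟨fun i ↦ g (S i) i, fun k ↦ (hSlt k).trans_le (hc.mono (image_mono (hSbox k)))⟩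

lemma exists_isCompact_subset_range_le (hc : IsChoquetCapacity c) {f : (ℕ → ℕ) → X}
    (hf : Continuous f) (ha : a < c (range f)) :
    ∃ K ⊆ range f, IsCompact K ∧ a ≤ c K := by
  obtain ⟨b, hb⟩ := hc.exists_forall_lt_image_box ha
  have hcompact : IsCompact (f '' Iic b) := (Icc_bot (a := b) ▸ isCompact_Icc).image hf
  refine ⟨f '' Iic b, image_subset_range f _, hcompact, le_of_not_gt fun hlt ↦ ?_⟩
  obtain ⟨O, hO, hbO, hOa⟩ := hc.exists_isOpen_lt hcompact hlt
  obtain ⟨k, hk⟩ :=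
    exists_forall_lt_le_subset_of_Iic_subset (hO.preimage hf) (image_subset_iff.1 hbO)
  exact lt_asymm (hb k) ((hc.mono (image_subset_iff.2 hk)).trans_lt hOa)

theorem eq_iSup_isCompact_of_analyticSet [DenselyOrdered α] (hc : IsChoquetCapacity c)
    {Z : Set X} (hZ : AnalyticSet Z) :
    c Z = ⨆ (K : Set X) (_ : K ⊆ Z) (_ : IsCompact K), c K := by
  refine le_antisymm ?_ (iSup₂_le fun K hK ↦ iSup_le fun _ ↦ hc.mono hK)
  rw [AnalyticSet] at hZ
  obtain rfl | ⟨f, hf, rfl⟩ := hZ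
  · exact le_iSup₂_of_le ∅ subset_rfl (le_iSup_of_le isCompact_empty le_rfl)
  · refine le_of_forall_lt_imp_le_of_dense fun a ha ↦ ?_
    obtain ⟨K, hK, hcompact, haK⟩ := hc.exists_isCompact_subset_range_le hf ha
    exact le_iSup₂_of_le K hK (le_iSup_of_le hcompact haK)

end IsChoquetCapacity

end Capacity

section MinimalElements

variable {ι : Type*} [PartialOrder ι]

/-- The set of minimal elements of `S`. For a cover indexed by strings, ordered by the prefix
relation, discarding all other strings does not change the set covered. -/
def minimalElements (S : Set ι) : Set ι := {u | Minimal (· ∈ S) u}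

lemma minimalElements_subset (S : Set ι) : minimalElements S ⊆ S := fun _ hu ↦ hu.prop

lemma minimalElements_inter_subset {S S' : Set ι} (h : S' ⊆ S) :
    minimalElements S ∩ S' ⊆ minimalElements S' := fun _ hu ↦ hu.1.mono h hu.2

lemma minimalElements_union_subset (S S' : Set ι) :
    minimalElements (S ∪ S') ⊆ minimalElements (minimalElements S ∪ S') := fun _ hu ↦
  minimalElements_inter_subset (union_subset_union_left S' (minimalElements_subset S))
    ⟨hu, hu.prop.imp_left fun huS ↦ minimalElements_inter_subset subset_union_left ⟨hu, huS⟩⟩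

lemma biUnion_minimalElements {X : Type*} [WellFoundedLT ι] {E : ι → Set X} (hE : Antitone E)
    (S : Set ι) : ⋃ u ∈ minimalElements S, E u = ⋃ u ∈ S, E u := by
  refine (biUnion_subset_biUnion_left (minimalElements_subset S)).antisymm
    (iUnion₂_subset fun u hu ↦ ?_)
  obtain ⟨v, hvu, hv⟩ := exists_minimal_le_of_wellFoundedLT (· ∈ S) u hu
  exact (hE hvu).trans (subset_biUnion_of_mem (u := E) hv)

lemma subset_biUnion_nonminimal_union_inter {X : Type*} {E : ι → Set X} {A : Set ι}
    (hcomp : ∀ u ∈ A, ∀ v ∈ A, (E u ∩ E v).Nonempty → u ≤ v ∨ v ≤ u)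
    {Z : Set X} {B C : Set ι} (hBA : B ⊆ A) (hCA : C ⊆ A)
    (hB : Z ⊆ ⋃ u ∈ B, E u) (hC : Z ⊆ ⋃ u ∈ C, E u) :
    Z ⊆ ⋃ u ∈ (B ∪ C) \ minimalElements (B ∪ C) ∪ B ∩ C, E u := by
  intro x hx
  obtain ⟨u, hu, hxu⟩ := mem_iUnion₂.1 (hB hx)
  obtain ⟨v, hv, hxv⟩ := mem_iUnion₂.1 (hC hx)
  obtain rfl | hne := eq_or_ne u v
  · exact mem_biUnion (Or.inr ⟨hu, hv⟩) hxu
  obtain huv | hvu := hcomp u (hBA hu) v (hCA hv) ⟨x, hxu, hxv⟩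
  · exact mem_biUnion (Or.inl ⟨Or.inr hv, fun hmin ↦ hne (hmin.eq_of_le (Or.inl hu) huv)⟩) hxv
  · exact mem_biUnion (Or.inl ⟨Or.inl hu, fun hmin ↦ hne (hmin.eq_of_ge (Or.inr hv) hvu)⟩) hxu

lemma measure_minimalElements_iUnion_le [MeasurableSpace ι] (μ : Measure ι) {S : ℕ → Set ι}
    (hS : Monotone S) :
    μ (minimalElements (⋃ n, S n)) ≤ ⨆ n, μ (minimalElements (S n)) := by
  have hmono : Monotone fun n ↦ minimalElements (⋃ n, S n) ∩ S n := fun _ _ h ↦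
    inter_subset_inter_right _ (hS h)
  calc μ (minimalElements (⋃ n, S n))
      = μ (⋃ n, minimalElements (⋃ n, S n) ∩ S n) := by
        rw [← inter_iUnion, inter_eq_left.2 (minimalElements_subset _)]
    _ = ⨆ n, μ (minimalElements (⋃ n, S n) ∩ S n) := hmono.measure_iUnion
    _ ≤ ⨆ n, μ (minimalElements (S n)) :=
        iSup_mono fun n ↦ measure_mono (minimalElements_inter_subset (subset_iUnion S n))

end MinimalElements

section CoverMass

variable {X ι : Type*} [MeasurableSpace ι]

/-- The infimum of the masses `μ Λ` of the index families `Λ ⊆ A` for which the sets `E u`, `u ∈ Λ`,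
cover `Z`. The weights in a cover sum are encoded as a measure on the indices, which makes
modularity and continuity from below of the weight available. -/
noncomputable def coverMass (μ : Measure ι) (E : ι → Set X) (A : Set ι) (Z : Set X) : ℝ≥0∞ :=
  ⨅ (Λ : Set ι) (_ : Λ ⊆ A) (_ : Z ⊆ ⋃ u ∈ Λ, E u), μ Λ

variable {μ : Measure ι} {E : ι → Set X} {A : Set ι}

lemma coverMass_le {Z : Set X} {Λ : Set ι} (hΛ : Λ ⊆ A) (hZ : Z ⊆ ⋃ u ∈ Λ, E u) :
    coverMass μ E A Z ≤ μ Λ :=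
  iInf₂_le_of_le Λ hΛ (iInf_le _ hZ)

lemma coverMass_lt_iff {Z : Set X} {a : ℝ≥0∞} :
    coverMass μ E A Z < a ↔ ∃ Λ ⊆ A, Z ⊆ ⋃ u ∈ Λ, E u ∧ μ Λ < a := by
  simp only [coverMass, iInf_lt_iff, exists_prop]

lemma coverMass_mono : Monotone (coverMass μ E A) := fun _ _ h ↦
  le_iInf₂ fun _ hΛ ↦ le_iInf fun hZ ↦ coverMass_le hΛ (h.trans hZ)

lemma exists_isOpen_coverMass_lt [TopologicalSpace X] (hopen : ∀ u ∈ A, IsOpen (E u)) {Z : Set X}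
    {a : ℝ≥0∞} (ha : coverMass μ E A Z < a) :
    ∃ O, IsOpen O ∧ Z ⊆ O ∧ coverMass μ E A O < a := by
  obtain ⟨Λ, hΛ, hZ, hμ⟩ := coverMass_lt_iff.1 ha
  exact ⟨⋃ u ∈ Λ, E u, isOpen_biUnion fun u hu ↦ hopen u (hΛ hu), hZ,
    (coverMass_le hΛ subset_rfl).trans_lt hμ⟩

variable [DiscreteMeasurableSpace ι] [PartialOrder ι]

lemma measure_minimalElements_union_add_coverMass_le
    (hcomp : ∀ u ∈ A, ∀ v ∈ A, (E u ∩ E v).Nonempty → u ≤ v ∨ v ≤ u)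
    {Z : Set X} {B C : Set ι} (hBA : B ⊆ A) (hCA : C ⊆ A)
    (hB : Z ⊆ ⋃ u ∈ B, E u) (hC : Z ⊆ ⋃ u ∈ C, E u) :
    μ (minimalElements (B ∪ C)) + coverMass μ E A Z ≤ μ B + μ C := by
  set m := minimalElements (B ∪ C)
  have hRA : (B ∪ C) \ m ∪ B ∩ C ⊆ A :=
    union_subset (sdiff_subset.trans (union_subset hBA hCA)) (inter_subset_left.trans hBA)
  calc μ m + coverMass μ E A Z
      ≤ μ m + μ ((B ∪ C) \ m ∪ B ∩ C) := by
        gcongr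
        exact coverMass_le hRA (subset_biUnion_nonminimal_union_inter hcomp hBA hCA hB hC)
    _ ≤ μ m + (μ ((B ∪ C) \ m) + μ (B ∩ C)) := by
        gcongr
        exact measure_union_le _ _
    _ = μ (B ∪ C) + μ (B ∩ C) := by
        rw [← add_assoc, measure_add_sdiff MeasurableSet.of_discrete.nullMeasurableSet,
          union_eq_right.2 (minimalElements_subset (B ∪ C))]
    _ = μ B + μ C := measure_union_add_inter B .of_discrete

variable [WellFoundedLT ι]

lemma measure_minimalElements_accumulate_le (hE : Antitone E)
    (hcomp : ∀ u ∈ A, ∀ v ∈ A, (E u ∩ E v).Nonempty → u ≤ v ∨ v ≤ u)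
    {Z : ℕ → Set X} (hZ : Monotone Z) (hfin : ∀ n, coverMass μ E A (Z n) ≠ ∞)
    {Λ : ℕ → Set ι} (hΛA : ∀ n, Λ n ⊆ A) (hZΛ : ∀ n, Z n ⊆ ⋃ u ∈ Λ n, E u)
    {δ : ℕ → ℝ≥0∞} (hμΛ : ∀ n, μ (Λ n) ≤ coverMass μ E A (Z n) + δ n) (n : ℕ) :
    μ (minimalElements (accumulate Λ n)) ≤
      coverMass μ E A (Z n) + ∑ i ∈ Finset.range (n + 1), δ i := by
  induction n with
  | zero =>
    rw [accumulate_zero_nat, zero_add, Finset.sum_range_one]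
    exact (measure_mono (minimalElements_subset _)).trans (hμΛ 0)
  | succ n ih =>
    have hmA : minimalElements (accumulate Λ n) ⊆ A :=
      (minimalElements_subset _).trans (iUnion₂_subset fun i _ ↦ hΛA i)
    have hZm : Z n ⊆ ⋃ u ∈ minimalElements (accumulate Λ n), E u := by
      rw [biUnion_minimalElements hE]
      exact (hZΛ n).trans (biUnion_subset_biUnion_left subset_accumulate)
    refine (ENNReal.add_le_add_iff_right (hfin n)).1 ?_
    calc μ (minimalElements (accumulate Λ (n + 1))) + coverMass μ E A (Z n)
        ≤ μ (minimalElements (minimalElements (accumulate Λ n) ∪ Λ (n + 1))) +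
            coverMass μ E A (Z n) := by
          rw [accumulate_succ]
          gcongr
          exact minimalElements_union_subset _ _
      _ ≤ μ (minimalElements (accumulate Λ n)) + μ (Λ (n + 1)) :=
          measure_minimalElements_union_add_coverMass_le hcomp hmA (hΛA (n + 1)) hZm
            ((hZ n.le_succ).trans (hZΛ (n + 1)))
      _ ≤ (coverMass μ E A (Z n) + ∑ i ∈ Finset.range (n + 1), δ i) +
            (coverMass μ E A (Z (n + 1)) + δ (n + 1)) := add_le_add ih (hμΛ (n + 1))
      _ = coverMass μ E A (Z (n + 1)) + ∑ i ∈ Finset.range (n + 2), δ i +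
            coverMass μ E A (Z n) := by
          rw [Finset.sum_range_succ _ (n + 1)]
          ring

theorem coverMass_iUnion_le_iSup (hE : Antitone E)
    (hcomp : ∀ u ∈ A, ∀ v ∈ A, (E u ∩ E v).Nonempty → u ≤ v ∨ v ≤ u)
    {Z : ℕ → Set X} (hZ : Monotone Z) :
    coverMass μ E A (⋃ n, Z n) ≤ ⨆ n, coverMass μ E A (Z n) := by
  refine ENNReal.le_of_forall_pos_le_add fun ε hε hlt ↦ ?_
  obtain ⟨δ, hδpos, hδε⟩ :=
    ENNReal.exists_pos_sum_of_countable' (ENNReal.coe_ne_zero.2 hε.ne') ℕ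
  have hfin (n : ℕ) : coverMass μ E A (Z n) ≠ ∞ := ((le_iSup _ n).trans_lt hlt).ne
  choose Λ hΛA hZΛ hμΛ using fun n ↦
    coverMass_lt_iff.1 (ENNReal.lt_add_right (hfin n) (hδpos n).ne')
  have hcover : ⋃ n, Z n ⊆ ⋃ u ∈ minimalElements (⋃ n, Λ n), E u := by
    rw [biUnion_minimalElements hE]
    exact iUnion_subset fun n ↦ (hZΛ n).trans (biUnion_subset_biUnion_left (subset_iUnion Λ n))
  calc coverMass μ E A (⋃ n, Z n)
      ≤ μ (minimalElements (⋃ n, Λ n)) :=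
        coverMass_le ((minimalElements_subset _).trans (iUnion_subset hΛA)) hcover
    _ ≤ ⨆ n, μ (minimalElements (accumulate Λ n)) := by
        rw [← iUnion_accumulate]
        exact measure_minimalElements_iUnion_le μ monotone_accumulate
    _ ≤ ⨆ n, (coverMass μ E A (Z n) + ∑ i ∈ Finset.range (n + 1), δ i) :=
        iSup_mono <| measure_minimalElements_accumulate_le hE hcomp hZ hfin hΛA hZΛ
          fun n ↦ (hμΛ n).le
    _ ≤ (⨆ n, coverMass μ E A (Z n)) + ε :=
        iSup_le fun n ↦ add_le_add (le_iSup (fun n ↦ coverMass μ E A (Z n)) n)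
          ((ENNReal.sum_le_tsum _).trans hδε.le)

theorem isChoquetCapacity_coverMass [TopologicalSpace X] (hE : Antitone E)
    (hcomp : ∀ u ∈ A, ∀ v ∈ A, (E u ∩ E v).Nonempty → u ≤ v ∨ v ≤ u)
    (hopen : ∀ u ∈ A, IsOpen (E u)) : IsChoquetCapacity (coverMass μ E A) where
  mono := coverMass_mono
  iUnion_le_iSup _ hZ := coverMass_iUnion_le_iSup hE hcomp hZ
  exists_isOpen_lt _ _ _ ha := exists_isOpen_coverMass_lt hopen ha

end CoverMass

lemma withDensity_count_apply {ι : Type*} [MeasurableSpace ι] [DiscreteMeasurableSpace ι]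
    (w : ι → ℝ≥0∞) (S : Set ι) : Measure.count.withDensity w S = ∑' u : S, w u := by
  rw [withDensity_apply w .of_discrete, ← lintegral_indicator .of_discrete, lintegral_count,
    tsum_subtype]

section Strings

/-- The prefix order on strings. It is not an instance because lists already carry the
lexicographic order. -/
abbrev prefixOrder (α : Type*) : PartialOrder (List α) where
  le := (· <+: ·)
  le_refl _ := List.prefix_rfl
  le_trans _ _ _ := List.IsPrefix.trans
  le_antisymm _ _ h h' := h.eq_of_length_le h'.length_le

lemma wellFoundedLT_prefixOrder (α : Type*) : @WellFoundedLT (List α) (prefixOrder α).toLT := by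
  let := prefixOrder α
  refine StrictMono.wellFoundedLT (f := List.length) fun u v huv ↦ ?_
  exact huv.le.length_le.lt_of_ne fun h ↦ huv.ne (huv.le.eq_of_length h)

variable {X : Type*} {T : X → X}

lemma stringSet_subset_of_prefix : ∀ {u v : List (Set X)}, u <+: v → stringSet T v ⊆ stringSet T u
  | [], _, _ => subset_univ _
  | _ :: _, [], h => absurd (List.prefix_nil.1 h) (List.cons_ne_nil _ _)
  | _ :: _, _ :: _, h => by
    obtain ⟨rfl, h'⟩ := List.cons_prefix_cons.1 h
    exact inter_subset_inter_right _ (preimage_mono (stringSet_subset_of_prefix h'))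

lemma prefix_or_prefix_of_mem_stringSet {U : Set (Set X)} (hU : U.PairwiseDisjoint id) :
    ∀ {u v : List (Set X)} {x : X}, (∀ V ∈ u, V ∈ U) → (∀ V ∈ v, V ∈ U) →
      x ∈ stringSet T u → x ∈ stringSet T v → u <+: v ∨ v <+: u
  | [], _, _, _, _, _, _ => Or.inl List.nil_prefix
  | _ :: _, [], _, _, _, _, _ => Or.inr List.nil_prefix
  | V :: u, W :: v, x, hu, hv, hxu, hxv => by
    rw [List.forall_mem_cons] at hu hv
    obtain rfl : V = W := hU.elim_set hu.1 hv.1 x hxu.1 hxv.1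
    simpa only [List.prefix_cons_inj] using
      prefix_or_prefix_of_mem_stringSet hU hu.2 hv.2 hxu.2 hxv.2

lemma isOpen_stringSet [TopologicalSpace X] (hT : Continuous T) :
    ∀ {u : List (Set X)}, (∀ V ∈ u, IsOpen V) → IsOpen (stringSet T u)
  | [], _ => isOpen_univ
  | _ :: _, hu => by
    rw [List.forall_mem_cons] at hu
    exact hu.1.inter ((isOpen_stringSet hT hu.2).preimage hT)

theorem isChoquetCapacity_coverM [TopologicalSpace X] (hT : Continuous T) {U : Finset (Set X)}
    (hUopen : ∀ V ∈ U, IsOpen V) (hUdisj : (U : Set (Set X)).PairwiseDisjoint id) (s : ℝ) (N : ℕ) :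
    IsChoquetCapacity (coverM T U s N) := by
  let := prefixOrder (Set X)
  have := wellFoundedLT_prefixOrder (Set X)
  let : MeasurableSpace (List (Set X)) := ⊤
  let w (u : List (Set X)) : ℝ≥0∞ := ENNReal.ofReal (Real.exp (-s * u.length))
  let A : Set (List (Set X)) := {u | (∀ V ∈ u, V ∈ U) ∧ N ≤ u.length}
  have hcoverM : coverM T U s N = coverMass (Measure.count.withDensity w) (stringSet T) A := by
    funext Z
    simp only [coverMass, withDensity_count_apply]
    rfl
  rw [hcoverM]
  refine isChoquetCapacity_coverMass (fun _ _ ↦ stringSet_subset_of_prefix) ?_ ?_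
  · rintro u hu v hv ⟨x, hxu, hxv⟩
    exact prefix_or_prefix_of_mem_stringSet hUdisj hu.1 hv.1 hxu hxv
  · exact fun u hu ↦ isOpen_stringSet hT fun V hV ↦ hUopen V (hu.1 V hV)

end Strings

theorem coverM_analytic_eq_iSup_compact_general {X : Type*} [TopologicalSpace X]
    {T : X → X} (hT : Continuous T) {U : Finset (Set X)} (hUopen : ∀ V ∈ U, IsOpen V)
    (hUdisj : (U : Set (Set X)).PairwiseDisjoint id) (s : ℝ) (N : ℕ)
    {Z : Set X} (hZ : AnalyticSet Z) :
    coverM T U s N Z = ⨆ (K : Set X) (_ : K ⊆ Z) (_ : IsCompact K), coverM T U s N K :=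
  (isChoquetCapacity_coverM hT hUopen hUdisj s N).eq_iSup_isCompact_of_analyticSet hZ

/-- **Feng–Huang, Proposition 3.6(ii)**: let `(X,T)` be a topological dynamical system
and `𝒰` a finite partition of `X` into closed-open sets.  If `Z ⊆ X` is analytic, then
`M^s_N(𝒰, Z) = sup { M^s_N(𝒰, K) : K ⊆ Z compact }`. -/
theorem coverM_analytic_eq_iSup_compact
    {X : Type*} [MetricSpace X] [CompactSpace X]
    (T : X → X) (hT : Continuous T)
    (U : Finset (Set X)) (hUclopen : ∀ V ∈ U, IsClopen V)
    (hUdisj : (U : Set (Set X)).PairwiseDisjoint id)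
    (hUcover : ⋃₀ (U : Set (Set X)) = Set.univ)
    (s : ℝ) (hs : 0 ≤ s) (N : ℕ)
    (Z : Set X) (hZ : MeasureTheory.AnalyticSet Z) :
    coverM T U s N Z = ⨆ (K : Set X) (_ : K ⊆ Z) (_ : IsCompact K), coverM T U s N K :=
  coverM_analytic_eq_iSup_compact_general hT (fun V hV ↦ (hUclopen V hV).isOpen) hUdisj s N hZ
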